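/- Let n, ĝ ∈ ℝ³ be unit vectors, Ω ∈ ℝ³, N² ∈ ℝ, and λ ∈ ℂ. Set w = ĝ − (n·ĝ)n, let P_n η = (n·η)n and P_n^⊥η = η − (n·η)n (ℂ-linear maps on ℂ³), let R_Ω η = Ω × η and C_n η = n × η (cross products extended ℂ-bilinearly), and define the ℂ-linear map Ṽ = P_n + P_n^⊥ ∘ (λ²·Id + 2λ·R_Ω + N²·ĝĝᵀ) ∘ P_n^⊥ on ℂ³, where ĝĝᵀ η = (ĝ·η)ĝ. Set d = λ⁴ + λ²(N²|w|² + 4(Ω·n)²) and assume d ≠ 0. Then the ℂ-linear map W = P_n + d⁻¹·(λ²·P_n^⊥ − 2λ(Ω·n)·C_n + N²·(|w|²·P_n^⊥ − wwᵀ)) is a two-sided inverse of Ṽ (i.e. Ṽ ∘ W = Id and W ∘ Ṽ = Id), where wwᵀ η = (w·η)w. -/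

import Mathlib

/-!
Put `a = Ω·n`, `C = n × ·`, `P = P_n^⊥` and `S = wwᵀ`. Compressing to the plane `n^⊥` gives
`P R_Ω P = a C` and `P ĝĝᵀ P = S`, so `Ṽ = P_n + (λ² P + 2λa C + N² S)`. On that plane `C` is the
rotation by a right angle, hence `C² = -P`, `S² = |w|² S` and `C S + S C = |w|² C` (a skew and a
symmetric operator in dimension two). The bracket in `W` is therefore the adjugate of the `2 × 2`
block of `Ṽ`, whose determinant is `d`, and `Ṽ ∘ W = Id` follows by expanding. In finite dimension
a one-sided inverse is two-sided.
-/

open Matrix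

noncomputable section

abbrev V3R : Type := Fin 3 → ℝ
abbrev V3C : Type := Fin 3 → ℂ

/-- Embedding of real 3-vectors into complex 3-vectors. -/
def toC (v : V3R) : V3C := fun i => (v i : ℂ)

/-- The `ℂ`-linear functional `η ↦ v ⬝ᵥ η` (ℂ-bilinear dot product with `v`). -/
def dotL (v : V3C) : V3C →ₗ[ℂ] ℂ where
  toFun η := v ⬝ᵥ η
  map_add' x y := by simp [dotProduct_add]
  map_smul' c x := by simp [dotProduct_smul]

/-- The rank-one map `abᵀ : η ↦ (b·η) a`. -/
def outerL (a b : V3R) : V3C →ₗ[ℂ] V3C := (dotL (toC b)).smulRight (toC a)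

/-- `P_n : η ↦ (n·η) n`. -/
def PnL (n : V3R) : V3C →ₗ[ℂ] V3C := outerL n n

/-- `P_n^⊥ : η ↦ η − (n·η) n`. -/
def PnPerpL (n : V3R) : V3C →ₗ[ℂ] V3C := LinearMap.id - PnL n

/-- `Ṽ = P_n + P_n^⊥ ∘ (λ² Id + 2λ R_Ω + N² ĝĝᵀ) ∘ P_n^⊥`. -/
def Vtilde (n g Ω : V3R) (N2 : ℝ) (l : ℂ) : V3C →ₗ[ℂ] V3C :=
  PnL n + PnPerpL n ∘ₗ
    (l ^ 2 • (LinearMap.id : V3C →ₗ[ℂ] V3C)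
      + (2 * l) • (crossProduct (toC Ω) : V3C →ₗ[ℂ] V3C)
      + (N2 : ℂ) • outerL g g) ∘ₗ PnPerpL n

lemma outerL_apply (a b : V3R) (η : V3C) : outerL a b η = (toC b ⬝ᵥ η) • toC a := rfl

lemma toC_dot (a b : V3R) : toC a ⬝ᵥ toC b = ((a ⬝ᵥ b : ℝ) : ℂ) := by
  simp [toC, dotProduct]

lemma toC_sub_smul (g n : V3R) (c : ℝ) : toC (g - c • n) = toC g - (c : ℂ) • toC n := by
  ext i; simp [toC]

lemma PnPerpL_apply (n : V3R) (η : V3C) : PnPerpL n η = η - (toC n ⬝ᵥ η) • toC n := rfl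

/-- Compression of `Ω × ·` to the plane orthogonal to the unit vector `n`. -/
lemma perp_cross_perp (n Ω η : V3C) (hn : n ⬝ᵥ n = 1) :
    (Ω ⨯₃ (η - (n ⬝ᵥ η) • n)) - (n ⬝ᵥ (Ω ⨯₃ (η - (n ⬝ᵥ η) • n))) • n
      = (Ω ⬝ᵥ n) • (n ⨯₃ η) := by
  simp only [dotProduct, Fin.sum_univ_three] at hn
  ext i
  fin_cases i <;> simp [crossProduct, dotProduct, Fin.sum_univ_three]
  · linear_combination (-(Ω 1 * η 2 - Ω 2 * η 1)) * hn
  · linear_combination (-(Ω 2 * η 0 - Ω 0 * η 2)) * hn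
  · linear_combination (-(Ω 0 * η 1 - Ω 1 * η 0)) * hn

/-- `C² = -P_n^⊥` for `C = n × ·`. -/
lemma cross_cross_unit (n η : V3C) (hn : n ⬝ᵥ n = 1) :
    n ⨯₃ (n ⨯₃ η) = (n ⬝ᵥ η) • n - η := by
  simp only [dotProduct, Fin.sum_univ_three] at hn
  ext i
  fin_cases i <;> simp [crossProduct, dotProduct, Fin.sum_univ_three]
  · linear_combination (-η 0) * hn
  · linear_combination (-η 1) * hn
  · linear_combination (-η 2) * hn

/-- `C S + S C = |w|² C` for `C = n × ·`, `S = wwᵀ` and `w ⟂ n`; this is the expansion of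
`(w × (n × w)) × η` as a triple product in two ways. -/
lemma cross_outer_anticomm (n w η : V3C) (hw : n ⬝ᵥ w = 0) :
    (w ⬝ᵥ η) • (n ⨯₃ w) + (w ⬝ᵥ (n ⨯₃ η)) • w = (w ⬝ᵥ w) • (n ⨯₃ η) := by
  simp only [dotProduct, Fin.sum_univ_three] at hw
  ext i
  fin_cases i <;> simp [crossProduct, dotProduct, Fin.sum_univ_three]
  · linear_combination (-(w 1 * η 2 - w 2 * η 1)) * hw
  · linear_combination (-(w 2 * η 0 - w 0 * η 2)) * hw
  · linear_combination (-(w 0 * η 1 - w 1 * η 0)) * hw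

/-- The block form `Ṽ = P_n + λ² P_n^⊥ + 2λ(Ω·n) C_n + N² wwᵀ`. -/
lemma Vtilde_apply (n g Ω : V3R) (hn : n ⬝ᵥ n = 1) (N2 : ℝ) (l : ℂ) (η : V3C) :
    Vtilde n g Ω N2 l η = PnL n η + (l ^ 2 • PnPerpL n η
      + (2 * l * ((Ω ⬝ᵥ n : ℝ) : ℂ)) • (toC n ⨯₃ η)
      + (N2 : ℂ) • outerL (g - (n ⬝ᵥ g) • n) (g - (n ⬝ᵥ g) • n) η) := by
  have hn' : toC n ⬝ᵥ toC n = 1 := by rw [toC_dot, hn]; simp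
  have hR := perp_cross_perp (toC n) (toC Ω) η hn'
  rw [toC_dot] at hR
  rw [mul_smul, ← hR]
  simp only [Vtilde, PnL, LinearMap.add_apply, LinearMap.comp_apply, LinearMap.smul_apply,
    LinearMap.id_apply, PnPerpL_apply, outerL_apply, toC_sub_smul, ← toC_dot,
    dotProduct_add, dotProduct_sub, dotProduct_smul, sub_dotProduct, smul_dotProduct, hn',
    smul_eq_mul, dotProduct_comm (toC g) (toC n)]
  module

/-- With `w = ĝ − (n·ĝ)n` and `d = λ⁴ + λ²(N²|w|² + 4(Ω·n)²) ≠ 0`, the map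
`W = P_n + d⁻¹(λ² P_n^⊥ − 2λ(Ω·n) C_n + N²(|w|² P_n^⊥ − wwᵀ))` is a two-sided inverse
of `Ṽ`. -/
theorem statement12 (n g Ω : V3R) (hn : n ⬝ᵥ n = 1) (hg : g ⬝ᵥ g = 1) (N2 : ℝ) (l : ℂ)
    (w : V3R) (hw : w = g - (n ⬝ᵥ g) • n)
    (d : ℂ) (hd : d = l ^ 4 + l ^ 2 * ((N2 * (w ⬝ᵥ w) + 4 * (Ω ⬝ᵥ n) ^ 2 : ℝ) : ℂ))
    (hdne : d ≠ 0) :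
    Vtilde n g Ω N2 l ∘ₗ
        (PnL n + d⁻¹ • (l ^ 2 • PnPerpL n
          - (2 * l * ((Ω ⬝ᵥ n : ℝ) : ℂ)) • (crossProduct (toC n) : V3C →ₗ[ℂ] V3C)
          + (N2 : ℂ) • (((w ⬝ᵥ w : ℝ) : ℂ) • PnPerpL n - outerL w w)))
      = LinearMap.id ∧
    (PnL n + d⁻¹ • (l ^ 2 • PnPerpL n
        - (2 * l * ((Ω ⬝ᵥ n : ℝ) : ℂ)) • (crossProduct (toC n) : V3C →ₗ[ℂ] V3C)
        + (N2 : ℂ) • (((w ⬝ᵥ w : ℝ) : ℂ) • PnPerpL n - outerL w w)))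
      ∘ₗ Vtilde n g Ω N2 l = LinearMap.id := by
  have hn' : toC n ⬝ᵥ toC n = 1 := by rw [toC_dot, hn]; simp
  have hnw : toC n ⬝ᵥ toC w = 0 := by
    rw [toC_dot, hw, dotProduct_sub, dotProduct_smul, hn]; simp
  have hwn : toC w ⬝ᵥ toC n = 0 := by rw [dotProduct_comm, hnw]
  have key : Vtilde n g Ω N2 l ∘ₗ
        (PnL n + d⁻¹ • (l ^ 2 • PnPerpL n
          - (2 * l * ((Ω ⬝ᵥ n : ℝ) : ℂ)) • (crossProduct (toC n) : V3C →ₗ[ℂ] V3C)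
          + (N2 : ℂ) • (((w ⬝ᵥ w : ℝ) : ℂ) • PnPerpL n - outerL w w)))
      = LinearMap.id := by
    refine LinearMap.ext fun η => ?_
    have hCS := cross_outer_anticomm (toC n) (toC w) η hnw
    have hCC := cross_cross_unit (toC n) η hn'
    rw [LinearMap.comp_apply, Vtilde_apply n g Ω hn, ← hw]
    push_cast at hd
    rw [← toC_dot, ← toC_dot] at hd
    simp only [PnL, LinearMap.add_apply, LinearMap.sub_apply, LinearMap.smul_apply,
      LinearMap.id_apply, PnPerpL_apply, outerL_apply, ← toC_dot, map_add, map_sub, map_smul,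
      hn', hnw, hwn, dot_self_cross, cross_self, hCC, smul_sub, smul_add, zero_smul, smul_zero]
    have hdi : d⁻¹ * (l ^ 4 + l ^ 2 * ((N2 : ℂ) * (toC w ⬝ᵥ toC w)
        + 4 * (toC Ω ⬝ᵥ toC n) ^ 2)) = 1 := by
      rw [← hd, inv_mul_cancel₀ hdne]
    -- The `S²` terms cancel; `C S + S C` cancels the cross terms, and `det = d` gives `P_n^⊥ η`.
    linear_combination (norm := module)
      (-(d⁻¹ * (2 * l * (toC Ω ⬝ᵥ toC n)) * (N2 : ℂ))) • hCS
        + hdi • (η - (toC n ⬝ᵥ η) • toC n)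
  exact ⟨key, mul_eq_one_comm.mp key⟩
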